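/- For λ > −1, t ∈ ℝ and integer m ≥ 2, let x_{ℓ,n}^{λ} denote the ℓ-th largest positive zero of the monic generalised higher order Freud polynomial P_n(x;λ). Then for every n ≥ 2, every ℓ ∈ {1, …, n−1} and every k ∈ (0,1]: (i) x_{ℓ+1,2n}^{λ} < x_{ℓ,2n−1}^{λ} < x_{ℓ,2n−1}^{λ+k} < x_{ℓ,2n−1}^{λ+1} < x_{ℓ,2n}^{λ}, and (ii) x_{ℓ+1,2n+1}^{λ} < x_{ℓ,2n}^{λ} < x_{ℓ,2n}^{λ+k} < x_{ℓ,2n}^{λ+1} = x_{ℓ,2n+1}^{λ} (with strict inequalities for k in the open interval (0,1)). -/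

import Mathlib

open MeasureTheory Real Polynomial

/-- The generalised higher order Freud weight `ω(x;t,λ) = |x|^{2λ+1} exp(t x² − x^{2m})`. -/
noncomputable def freudWeight (m : ℕ) (lam t x : ℝ) : ℝ :=
  |x| ^ (2 * lam + 1) * Real.exp (t * x ^ 2 - x ^ (2 * m))

/-- `z` is the `ℓ`-th largest positive zero of the polynomial `p`: it is a positive root of `p`
and exactly `ℓ − 1` distinct roots of `p` exceed it. -/
def IsNthLargestPosZero (p : Polynomial ℝ) (ℓ : ℕ) (z : ℝ) : Prop :=
  0 < z ∧ p.IsRoot z ∧ (p.roots.toFinset.filter (fun y => z < y)).card = ℓ - 1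

/-!
Let `L` be a functional on polynomials that is positive on nonnegative polynomials, `Q` its monic
orthogonal polynomial of degree `n`, and `R` the one of degree `n'` for a second functional `L'`.
Zeros are compared by testing `(q - c) r²`, where `r` vanishes at the zeros of `Q` with `q < c` and
at those of `R` with `q > c`: Gauss quadrature gives `0 ≤ L ((q - c) r²)` and
`L' ((q - c) r²) ≤ 0`. If these are incompatible, the degree of `r` is too large for the quadrature
rules, and this bounds the numbers of zeros of `Q` and `R` on the two sides of `c` from below.

Taking `q = X` and `L' = L`, or `L'` of weight `x²` relative to `L`, gives interlacing. Taking
`q = X²` and two even weights whose ratio is an increasing function of `x²` gives the monotonicity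
of the positive zeros in `λ` (Markov's theorem). The equality of zeros comes from
`P_{2n+1}(x;λ) = x P_{2n}(x;λ+1)`.
-/

section OrthogonalPolynomials

open scoped Finset

/-- A linear functional on real polynomials that is strictly positive on nonzero polynomials
without negative values, like integration against a positive weight. -/
def IsPositiveFunctional (L : ℝ[X] →ₗ[ℝ] ℝ) : Prop :=
  ∀ f : ℝ[X], f ≠ 0 → (∀ x, 0 ≤ f.eval x) → 0 < L f

/-- A functional on real polynomials is symmetric if it is invariant under `x ↦ -x`, like
integration against an even weight. -/
def IsSymmetricFunctional (L : ℝ[X] →ₗ[ℝ] ℝ) : Prop :=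
  ∀ f : ℝ[X], L (f.comp (-X)) = L f

/-- `Q` is the monic orthogonal polynomial of degree `n` of the functional `L`, orthogonality being
understood against all polynomials of lower degree. -/
structure IsMonicOrthogonal (L : ℝ[X] →ₗ[ℝ] ℝ) (n : ℕ) (Q : ℝ[X]) : Prop where
  monic : Q.Monic
  natDegree_eq : Q.natDegree = n
  map_mul_eq_zero : ∀ g : ℝ[X], g.degree < n → L (Q * g) = 0

variable {L L' : ℝ[X] →ₗ[ℝ] ℝ} {n : ℕ} {Q R : ℝ[X]}

lemma IsPositiveFunctional.of_sq_mul {u : ℝ[X]} (hL : IsPositiveFunctional L) (hu : u ≠ 0)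
    (hLu : ∀ f, L' f = L (u ^ 2 * f)) : IsPositiveFunctional L' := fun f hf hnonneg => by
  rw [hLu]
  refine hL _ (mul_ne_zero (pow_ne_zero 2 hu) hf) fun x => ?_
  rw [eval_mul, eval_pow]
  exact mul_nonneg (sq_nonneg _) (hnonneg x)

lemma degree_lt_of_natDegree_lt {f : ℝ[X]} (h : f.natDegree < n) : f.degree < n :=
  degree_le_natDegree.trans_lt (Nat.cast_lt.2 h)

lemma nonneg_or_nonpos_of_forall_eval_ne_zero {f : ℝ[X]} (hf : ∀ x, f.eval x ≠ 0) :
    (∀ x, 0 ≤ f.eval x) ∨ ∀ x, f.eval x ≤ 0 := by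
  by_contra! ⟨⟨a, ha⟩, b, hb⟩
  obtain ⟨c, hc⟩ := mem_range_of_exists_le_of_exists_ge f.continuous ⟨a, ha.le⟩ ⟨b, hb.le⟩
  exact hf c hc

lemma isMonicOrthogonal_of_pairwise {p : ℕ → ℝ[X]} (hmonic : ∀ n, (p n).Monic)
    (hdeg : ∀ n, (p n).natDegree = n) (horth : ∀ j k, j ≠ k → L (p j * p k) = 0) (n : ℕ) :
    IsMonicOrthogonal L n (p n) := by
  refine ⟨hmonic n, hdeg n, fun g hg => ?_⟩
  let S : Polynomial.Sequence ℝ :=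
    ⟨p, fun i => by rw [degree_eq_natDegree (hmonic i).ne_zero, hdeg]⟩
  have hspan : Submodule.span ℝ (p '' Set.Iio n) = degreeLT ℝ n :=
    S.span_degreeLT fun i _ => by simp [S, (hmonic i).leadingCoeff]
  have hker : Submodule.span ℝ (p '' Set.Iio n) ≤ LinearMap.ker (L ∘ₗ LinearMap.mulLeft ℝ (p n)) :=
    Submodule.span_le.2 <| by
      rintro _ ⟨i, hi, rfl⟩
      exact horth n i (Set.mem_Iio.1 hi).ne'
  exact hker (hspan ▸ mem_degreeLT.2 hg)

namespace IsMonicOrthogonal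

lemma degree_eq (hQ : IsMonicOrthogonal L n Q) : Q.degree = n := by
  rw [degree_eq_natDegree hQ.monic.ne_zero, hQ.natDegree_eq]

lemma mem_roots_toFinset (hQ : IsMonicOrthogonal L n Q) {s : ℝ} :
    s ∈ Q.roots.toFinset ↔ Q.IsRoot s := by
  rw [Multiset.mem_toFinset, mem_roots hQ.monic.ne_zero]

theorem unique (hL : IsPositiveFunctional L) (hQ : IsMonicOrthogonal L n Q)
    (hR : IsMonicOrthogonal L n R) : Q = R := by
  by_contra hne
  have hdeg : (Q - R).degree < n := hQ.degree_eq ▸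
    degree_sub_lt_left (hQ.degree_eq.trans hR.degree_eq.symm) hQ.monic.ne_zero
      (by rw [hQ.monic.leadingCoeff, hR.monic.leadingCoeff])
  have hpos : 0 < L ((Q - R) * (Q - R)) :=
    hL _ (mul_self_ne_zero.2 (sub_ne_zero.2 hne)) fun x => by
      rw [eval_mul]; exact mul_self_nonneg _
  rw [sub_mul, map_sub, hQ.map_mul_eq_zero _ hdeg, hR.map_mul_eq_zero _ hdeg, sub_zero] at hpos
  exact hpos.false

lemma natDegree_eq_zero_of_mul_eq (hL : IsPositiveFunctional L) (hQ : IsMonicOrthogonal L n Q)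
    {f g : ℝ[X]} (hfg : f * g = Q) (hf : ∀ x, 0 ≤ f.eval x) : f.natDegree = 0 := by
  by_contra hdeg
  have hfg0 : f * g ≠ 0 := hfg ▸ hQ.monic.ne_zero
  have hg0 := right_ne_zero_of_mul hfg0
  have hadd : f.natDegree + g.natDegree = n := by
    rw [← natDegree_mul (left_ne_zero_of_mul hfg0) hg0, hfg, hQ.natDegree_eq]
  have hpos : 0 < L (f * g * g) := hL _ (mul_ne_zero hfg0 hg0) fun x => by
    rw [mul_assoc, eval_mul, eval_mul]
    exact mul_nonneg (hf x) (mul_self_nonneg _)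
  rw [hfg, hQ.map_mul_eq_zero g (degree_lt_of_natDegree_lt (by lia))] at hpos
  exact hpos.false

lemma nodup_roots (hL : IsPositiveFunctional L) (hQ : IsMonicOrthogonal L n Q) :
    Q.roots.Nodup := by
  refine Multiset.nodup_iff_count_le_one.2 fun a => ?_
  by_contra! hcount
  rw [count_roots] at hcount
  obtain ⟨g, hg⟩ : (X - C a) ^ 2 ∣ Q := (le_rootMultiplicity_iff hQ.monic.ne_zero).1 hcount
  have hdeg := hQ.natDegree_eq_zero_of_mul_eq hL hg.symm fun x => by
    rw [eval_pow]; exact sq_nonneg _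
  simp [(monic_X_sub_C a).natDegree_pow] at hdeg

theorem card_roots (hL : IsPositiveFunctional L) (hQ : IsMonicOrthogonal L n Q) :
    #Q.roots.toFinset = n := by
  rw [Multiset.toFinset_card_of_nodup (hQ.nodup_roots hL)]
  obtain ⟨f, hf, hcard, hroots⟩ := exists_prod_multiset_X_sub_C_mul Q
  have hf0 : f ≠ 0 := right_ne_zero_of_mul (hf.trans_ne hQ.monic.ne_zero)
  have hroot : ∀ x, f.eval x ≠ 0 := fun x hx => by
    simpa [hroots] using (mem_roots hf0).2 hx
  have hdeg : f.natDegree = 0 := by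
    rcases nonneg_or_nonpos_of_forall_eval_ne_zero hroot with h | h
    · exact hQ.natDegree_eq_zero_of_mul_eq hL ((mul_comm _ _).trans hf) h
    · rw [← natDegree_neg]
      exact hQ.natDegree_eq_zero_of_mul_eq hL (f := -f)
        (g := -(Q.roots.map fun a => X - C a).prod) (by rw [neg_mul_neg, mul_comm, hf])
        fun x => by simpa using h x
  rw [← hQ.natDegree_eq, ← hcard, hdeg, add_zero]

lemma exists_isRoot_eval_ne_zero (hL : IsPositiveFunctional L) (hQ : IsMonicOrthogonal L n Q)
    {f : ℝ[X]} (hf : f ≠ 0) (hdeg : f.natDegree + 1 < n) (c : ℝ) :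
    ∃ s, Q.IsRoot s ∧ s ≠ c ∧ f.eval s ≠ 0 := by
  by_contra! h
  have hsub : Q.roots.toFinset.erase c ⊆ f.roots.toFinset := fun s hs => by
    obtain ⟨hsc, hs⟩ := Finset.mem_erase.1 hs
    rw [Multiset.mem_toFinset, mem_roots hf]
    exact h s (hQ.mem_roots_toFinset.1 hs) hsc
  have herase := Finset.pred_card_le_card_erase (a := c) (s := Q.roots.toFinset)
  rw [hQ.card_roots hL] at herase
  have hcard := (Finset.card_le_card hsub).trans
    ((Multiset.toFinset_card_le f.roots).trans (card_roots' f))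
  lia

end IsMonicOrthogonal

/-- The Christoffel number of a zero `s` of `Q`: the weight of the node `s` in the Gauss quadrature
rule of `L` with nodes the zeros of `Q`. -/
noncomputable def christoffelNumber (L : ℝ[X] →ₗ[ℝ] ℝ) (Q : ℝ[X]) (s : ℝ) : ℝ :=
  L (Lagrange.basis Q.roots.toFinset id s)

namespace IsMonicOrthogonal

lemma map_modByMonic (hQ : IsMonicOrthogonal L n Q) {f : ℝ[X]} (hf : f.natDegree < 2 * n) :
    L (f %ₘ Q) = L f := by
  have hdeg : (f /ₘ Q).degree < n := degree_lt_of_natDegree_lt <| by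
    rw [natDegree_divByMonic _ hQ.monic, hQ.natDegree_eq]; lia
  conv_rhs => rw [← modByMonic_add_div f Q, map_add, hQ.map_mul_eq_zero _ hdeg, add_zero]

theorem gauss_quadrature (hL : IsPositiveFunctional L) (hQ : IsMonicOrthogonal L n Q) {f : ℝ[X]}
    (hf : f.natDegree < 2 * n) :
    L f = ∑ s ∈ Q.roots.toFinset, christoffelNumber L Q s * f.eval s := by
  have hdeg : (f %ₘ Q).degree < #Q.roots.toFinset := by
    rw [hQ.card_roots hL, ← hQ.degree_eq]
    exact degree_modByMonic_lt f hQ.monic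
  have heval : ∀ s ∈ Q.roots.toFinset, (f %ₘ Q).eval (id s) = f.eval s := fun s hs =>
    eval₂_modByMonic_eq_self_of_root (hQ.mem_roots_toFinset.1 hs)
  rw [← hQ.map_modByMonic hf,
    Lagrange.eq_interpolate_of_eval_eq _ (Set.injOn_id _) hdeg heval,
    Lagrange.interpolate_apply, map_sum]
  refine Finset.sum_congr rfl fun s _ => ?_
  rw [← smul_eq_C_mul, map_smul, smul_eq_mul, mul_comm, christoffelNumber]

lemma christoffelNumber_pos (hL : IsPositiveFunctional L) (hQ : IsMonicOrthogonal L n Q) {s : ℝ}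
    (hs : Q.IsRoot s) : 0 < christoffelNumber L Q s := by
  have hmem := hQ.mem_roots_toFinset.2 hs
  set b := Lagrange.basis Q.roots.toFinset id s with hb
  have hself : b.eval s = 1 := Lagrange.eval_basis_self (v := id) (Set.injOn_id _) hmem
  have hother : ∀ u ∈ Q.roots.toFinset, u ≠ s → b.eval u = 0 := fun u hu hus =>
    Lagrange.eval_basis_of_ne (v := id) hus.symm hu
  have hb0 : b ≠ 0 := fun h => by simp [h] at hself
  have hdeg : (b * b).natDegree < 2 * n := by
    have hn := hQ.card_roots hL ▸ Finset.card_pos.2 ⟨s, hmem⟩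
    rw [natDegree_mul hb0 hb0, hb, Lagrange.natDegree_basis (Set.injOn_id _) hmem,
      hQ.card_roots hL]
    lia
  calc 0 < L (b * b) := hL _ (mul_self_ne_zero.2 hb0) fun x => by
        rw [eval_mul]; exact mul_self_nonneg _
    _ = christoffelNumber L Q s := by
        rw [hQ.gauss_quadrature hL hdeg, Finset.sum_eq_single_of_mem s hmem fun u hu hus => by
          rw [eval_mul, hother u hu hus, mul_zero, mul_zero], eval_mul, hself, mul_one, mul_one]

lemma map_nonneg (hL : IsPositiveFunctional L) (hQ : IsMonicOrthogonal L n Q) {f : ℝ[X]}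
    (hdeg : f.natDegree < 2 * n) (hf : ∀ s, Q.IsRoot s → 0 ≤ f.eval s) : 0 ≤ L f := by
  rw [hQ.gauss_quadrature hL hdeg]
  refine Finset.sum_nonneg fun s hs => ?_
  have hroot := hQ.mem_roots_toFinset.1 hs
  exact mul_nonneg (hQ.christoffelNumber_pos hL hroot).le (hf s hroot)

lemma map_pos (hL : IsPositiveFunctional L) (hQ : IsMonicOrthogonal L n Q) {f : ℝ[X]}
    (hdeg : f.natDegree < 2 * n) (hf : ∀ s, Q.IsRoot s → 0 ≤ f.eval s)
    (hpos : ∃ s, Q.IsRoot s ∧ f.eval s ≠ 0) : 0 < L f := by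
  obtain ⟨a, ha, hfa⟩ := hpos
  rw [hQ.gauss_quadrature hL hdeg]
  refine Finset.sum_pos' (fun s hs => ?_) ⟨a, hQ.mem_roots_toFinset.2 ha,
    mul_pos (hQ.christoffelNumber_pos hL ha) ((hf a ha).lt_of_ne' hfa)⟩
  have hroot := hQ.mem_roots_toFinset.1 hs
  exact mul_nonneg (hQ.christoffelNumber_pos hL hroot).le (hf s hroot)

end IsMonicOrthogonal

section ZeroCounting

variable {q r u : ℝ[X]} {c : ℝ}

lemma natDegree_sub_C_mul_sq_le : ((q - C c) * r ^ 2).natDegree ≤ q.natDegree + 2 * r.natDegree :=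
  natDegree_mul_le.trans (add_le_add natDegree_sub_C.le natDegree_pow_le)

lemma neg_sub_C_neg_mul_sq : (-q - C (-c)) * r ^ 2 = -((q - C c) * r ^ 2) := by
  rw [C_neg]; ring

lemma eval_sub_C_mul_sq_nonneg {s : ℝ} (hr : q.eval s < c → r.eval s = 0) :
    0 ≤ ((q - C c) * r ^ 2).eval s := by
  rw [eval_mul, eval_pow, eval_sub, eval_C]
  rcases lt_or_ge (q.eval s) c with h | h
  · simp [hr h]
  · exact mul_nonneg (sub_nonneg.2 h) (sq_nonneg _)

lemma exists_monic_eval_eq_zero (A B : Finset ℝ) :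
    ∃ r : ℝ[X], r.Monic ∧ r.natDegree ≤ #A + #B ∧ (∀ s ∈ A, r.eval s = 0) ∧
      ∀ s ∈ B, r.eval s = 0 := by
  refine ⟨Lagrange.nodal (A ∪ B) id, Lagrange.nodal_monic, ?_, fun s hs => ?_, fun s hs => ?_⟩
  · rw [Lagrange.natDegree_nodal]; exact Finset.card_union_le A B
  · exact Lagrange.eval_nodal_at_node (v := id) (Finset.mem_union_left B hs)
  · exact Lagrange.eval_nodal_at_node (v := id) (Finset.mem_union_right A hs)

namespace IsMonicOrthogonal

lemma map_sub_C_mul_sq_nonneg (hL : IsPositiveFunctional L) (hQ : IsMonicOrthogonal L n Q)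
    (hdeg : q.natDegree + 2 * r.natDegree < 2 * n)
    (hr : ∀ s, Q.IsRoot s → q.eval s < c → r.eval s = 0) : 0 ≤ L ((q - C c) * r ^ 2) :=
  hQ.map_nonneg hL (natDegree_sub_C_mul_sq_le.trans_lt hdeg) fun s hs =>
    eval_sub_C_mul_sq_nonneg (hr s hs)

lemma map_sub_C_mul_sq_pos (hL : IsPositiveFunctional L) (hQ : IsMonicOrthogonal L n Q)
    (hdeg : q.natDegree + 2 * r.natDegree < 2 * n)
    (hr : ∀ s, Q.IsRoot s → q.eval s < c → r.eval s = 0)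
    (hpos : ∃ s, Q.IsRoot s ∧ q.eval s ≠ c ∧ r.eval s ≠ 0) : 0 < L ((q - C c) * r ^ 2) := by
  refine hQ.map_pos hL (natDegree_sub_C_mul_sq_le.trans_lt hdeg)
    (fun s hs => eval_sub_C_mul_sq_nonneg (hr s hs)) ?_
  obtain ⟨s, hs, hqs, hrs⟩ := hpos
  refine ⟨s, hs, ?_⟩
  rw [eval_mul, eval_pow, eval_sub, eval_C]
  exact mul_ne_zero (sub_ne_zero.2 hqs) (pow_ne_zero 2 hrs)

lemma map_sub_C_mul_sq_nonpos (hL : IsPositiveFunctional L) (hQ : IsMonicOrthogonal L n Q)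
    (hdeg : q.natDegree + 2 * r.natDegree < 2 * n)
    (hr : ∀ s, Q.IsRoot s → c < q.eval s → r.eval s = 0) : L ((q - C c) * r ^ 2) ≤ 0 := by
  have h := hQ.map_sub_C_mul_sq_nonneg hL (q := -q) (r := r) (c := -c) (by rwa [natDegree_neg])
    fun s hs h => hr s hs (by simpa using h)
  rwa [neg_sub_C_neg_mul_sq, map_neg, neg_nonneg] at h

lemma map_sub_C_mul_sq_neg (hL : IsPositiveFunctional L) (hQ : IsMonicOrthogonal L n Q)
    (hdeg : q.natDegree + 2 * r.natDegree < 2 * n)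
    (hr : ∀ s, Q.IsRoot s → c < q.eval s → r.eval s = 0)
    (hneg : ∃ s, Q.IsRoot s ∧ q.eval s ≠ c ∧ r.eval s ≠ 0) : L ((q - C c) * r ^ 2) < 0 := by
  have h := hQ.map_sub_C_mul_sq_pos hL (q := -q) (r := r) (c := -c) (by rwa [natDegree_neg])
    (fun s hs h => hr s hs (by simpa using h)) (by simpa using hneg)
  rwa [neg_sub_C_neg_mul_sq, map_neg, neg_pos] at h

theorem le_card_roots_lt_add_card_roots_gt_of_succ (hL : IsPositiveFunctional L)
    (hQ : IsMonicOrthogonal L (n + 1) Q) (hR : IsMonicOrthogonal L n R) (c : ℝ) :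
    n ≤ #{s ∈ Q.roots.toFinset | s < c} + #{s ∈ R.roots.toFinset | c < s} := by
  by_contra! hlt
  obtain ⟨r, hr, hdeg, hrQ, hrR⟩ := exists_monic_eval_eq_zero
    {s ∈ Q.roots.toFinset | s < c} {s ∈ R.roots.toFinset | c < s}
  simp only [Finset.mem_filter, hQ.mem_roots_toFinset, hR.mem_roots_toFinset, and_imp] at hrQ hrR
  obtain ⟨s, hs, hsc, hrs⟩ := hQ.exists_isRoot_eval_ne_zero hL hr.ne_zero (by lia) c
  have hpos : 0 < L ((X - C c) * r ^ 2) :=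
    hQ.map_sub_C_mul_sq_pos hL (by rw [natDegree_X]; lia)
      (by simpa only [eval_X] using hrQ) ⟨s, hs, by rwa [eval_X], hrs⟩
  have hnonpos : L ((X - C c) * r ^ 2) ≤ 0 :=
    hR.map_sub_C_mul_sq_nonpos hL (by rw [natDegree_X]; lia) (by simpa only [eval_X] using hrR)
  exact hpos.not_ge hnonpos

theorem le_card_roots_lt_add_card_roots_gt_of_sq_mul (hL : IsPositiveFunctional L)
    (hLu : ∀ f, L' f = L (u ^ 2 * f)) (hu : u.natDegree ≠ 0)
    (hQ : IsMonicOrthogonal L' n Q) (hR : IsMonicOrthogonal L (n + u.natDegree) R)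
    (huR : ∀ s, R.IsRoot s → u.eval s ≠ 0) (c : ℝ) :
    n ≤ #{s ∈ Q.roots.toFinset | s < c} + #{s ∈ R.roots.toFinset | c < s} := by
  by_contra! hlt
  obtain ⟨r, hr, hdeg, hrQ, hrR⟩ := exists_monic_eval_eq_zero
    {s ∈ Q.roots.toFinset | s < c} {s ∈ R.roots.toFinset | c < s}
  simp only [Finset.mem_filter, hQ.mem_roots_toFinset, hR.mem_roots_toFinset, and_imp] at hrQ hrR
  obtain ⟨s, hs, hsc, hrs⟩ := hR.exists_isRoot_eval_ne_zero hL hr.ne_zero (by lia) c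
  have hL' := hL.of_sq_mul (ne_zero_of_natDegree_gt hu.bot_lt) hLu
  have hnonneg : 0 ≤ L' ((X - C c) * r ^ 2) :=
    hQ.map_sub_C_mul_sq_nonneg hL' (by rw [natDegree_X]; lia) (by simpa only [eval_X] using hrQ)
  have hneg : L ((X - C c) * (u * r) ^ 2) < 0 := by
    have hur := natDegree_mul_le (p := u) (q := r)
    refine hR.map_sub_C_mul_sq_neg hL (by rw [natDegree_X]; lia) (fun s hs hsc => ?_)
      ⟨s, hs, by rwa [eval_X], by rw [eval_mul]; exact mul_ne_zero (huR s hs) hrs⟩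
    rw [eval_mul, hrR s hs (by rwa [eval_X] at hsc), mul_zero]
  rw [hLu, mul_left_comm, ← mul_pow] at hnonneg
  exact hneg.not_ge hnonneg

theorem le_card_roots_lt_add_card_roots_gt_of_markov (hL : IsPositiveFunctional L)
    (hL' : IsPositiveFunctional L') (hQ : IsMonicOrthogonal L n Q)
    (hR : IsMonicOrthogonal L' n R) {K : ℝ} (hK : 0 ≤ K)
    (hLL' : ∀ r : ℝ[X], r ≠ 0 → K * L ((q - C c) * r ^ 2) < L' ((q - C c) * r ^ 2)) :
    2 * n ≤ q.natDegree + 2 * (#{s ∈ Q.roots.toFinset | q.eval s < c} +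
      #{s ∈ R.roots.toFinset | c < q.eval s}) := by
  by_contra! hlt
  obtain ⟨r, hr, hdeg, hrQ, hrR⟩ := exists_monic_eval_eq_zero
    {s ∈ Q.roots.toFinset | q.eval s < c} {s ∈ R.roots.toFinset | c < q.eval s}
  simp only [Finset.mem_filter, hQ.mem_roots_toFinset, hR.mem_roots_toFinset, and_imp] at hrQ hrR
  have hnonneg := hQ.map_sub_C_mul_sq_nonneg hL (by lia) hrQ
  have hnonpos := hR.map_sub_C_mul_sq_nonpos hL' (by lia) hrR
  linarith [hLL' r hr.ne_zero, mul_nonneg hK hnonneg]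

lemma of_mul_of_sq_mul (hLu : ∀ f, L' f = L (u ^ 2 * f)) (hu : u.Monic)
    (hQ : IsMonicOrthogonal L (u.natDegree + n) (u * R)) : IsMonicOrthogonal L' n R := by
  have hR : R.Monic := hu.of_mul_monic_left hQ.monic
  refine ⟨hR, ?_, fun g hg => ?_⟩
  · have hdeg := hQ.natDegree_eq
    rw [hu.natDegree_mul hR] at hdeg
    exact Nat.add_left_cancel hdeg
  · rw [hLu, show u ^ 2 * (R * g) = u * R * (u * g) by ring]
    refine hQ.map_mul_eq_zero _ ?_
    rw [degree_mul, degree_eq_natDegree hu.ne_zero, Nat.cast_add]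
    exact WithBot.add_lt_add_left (WithBot.coe_ne_bot) hg

end IsMonicOrthogonal

end ZeroCounting

section RootCounts

variable {S : Finset ℝ} {x y : ℝ}

lemma card_filter_lt_add_card_filter_eq_add_card_filter_gt (S : Finset ℝ) (f : ℝ → ℝ) (c : ℝ) :
    #{s ∈ S | f s < c} + #{s ∈ S | f s = c} + #{s ∈ S | c < f s} = #S := by
  rw [← Finset.card_union_of_disjoint, ← Finset.card_union_of_disjoint]
  · congr 1
    ext s
    have := lt_trichotomy (f s) c
    simp only [Finset.mem_union, Finset.mem_filter]
    tauto
  · refine Finset.disjoint_left.2 fun s hs hs' => ?_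
    simp only [Finset.mem_union, Finset.mem_filter] at hs hs'
    rcases hs with ⟨-, hs⟩ | ⟨-, hs⟩ <;> linarith
  · exact Finset.disjoint_filter.2 fun s _ h => h.ne

lemma card_filter_lt_add_one_add_card_filter_gt (hx : x ∈ S) :
    #{s ∈ S | s < x} + 1 + #{s ∈ S | x < s} = #S := by
  have h := card_filter_lt_add_card_filter_eq_add_card_filter_gt S id x
  simpa only [id_eq, Finset.filter_eq', hx, if_true, Finset.card_singleton] using h

lemma lt_of_card_filter_gt_lt (h : #{s ∈ S | y < s} < #{s ∈ S | x < s}) : x < y := by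
  by_contra! hyx
  exact h.not_ge <| Finset.card_le_card <|
    Finset.monotone_filter_right S fun _ _ => hyx.trans_lt

lemma card_filter_sq_lt_sq (hS : ∀ s ∈ S, -s ∈ S) (hx : 0 ≤ x) :
    #{s ∈ S | x ^ 2 < s ^ 2} = 2 * #{s ∈ S | x < s} := by
  have hneg : #{s ∈ S | x < -s} = #{s ∈ S | x < s} :=
    Finset.card_nbij' Neg.neg Neg.neg (by simpa [Set.MapsTo] using fun s hs h => ⟨hS s hs, h⟩)
      (by simpa [Set.MapsTo] using fun s hs h => ⟨hS s hs, h⟩)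
      (fun s _ => neg_neg s) fun s _ => neg_neg s
  have hdisj : Disjoint {s ∈ S | x < s} {s ∈ S | x < -s} :=
    Finset.disjoint_filter.2 fun s _ h => by linarith
  rw [two_mul]
  nth_rw 2 [← hneg]
  rw [← Finset.card_union_of_disjoint hdisj, ← Finset.filter_or]
  congr 1
  refine Finset.filter_congr fun s _ => ?_
  rw [sq_lt_sq, abs_of_nonneg hx, lt_abs]

lemma card_filter_sq_lt_sq_add (hS : ∀ s ∈ S, -s ∈ S) (hx : 0 < x) (hxS : x ∈ S) :
    #{s ∈ S | s ^ 2 < x ^ 2} + 2 + 2 * #{s ∈ S | x < s} = #S := by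
  have heq : {s ∈ S | s ^ 2 = x ^ 2} = {x, -x} := by
    ext s
    simp only [Finset.mem_filter, Finset.mem_insert, Finset.mem_singleton,
      sq_eq_sq_iff_eq_or_eq_neg]
    exact and_iff_right_of_imp (by rintro (rfl | rfl); exacts [hxS, hS x hxS])
  have h := card_filter_lt_add_card_filter_eq_add_card_filter_gt S (· ^ 2) (x ^ 2)
  rwa [heq, Finset.card_pair (by linarith), card_filter_sq_lt_sq hS hx.le] at h

lemma zero_mem_iff_odd_card (hS : ∀ s ∈ S, -s ∈ S) : (0 : ℝ) ∈ S ↔ Odd #S := by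
  have h := card_filter_lt_add_card_filter_eq_add_card_filter_gt S (· ^ 2) (0 ^ 2)
  have hlt : {s ∈ S | s ^ 2 < 0 ^ 2} = ∅ :=
    Finset.filter_false_of_mem fun s _ => by simpa using sq_nonneg s
  rw [card_filter_sq_lt_sq hS le_rfl, hlt, Finset.card_empty, zero_add] at h
  have heq : {s ∈ S | s ^ 2 = 0 ^ 2} = if (0 : ℝ) ∈ S then {0} else ∅ := by
    rw [← Finset.filter_eq']
    exact Finset.filter_congr fun s _ => by simp
  rw [← h, heq]
  split_ifs with h0 <;> simp [h0]

end RootCounts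

namespace IsMonicOrthogonal

lemma neg_one_pow_mul_comp_neg_X (hL : IsSymmetricFunctional L) (hQ : IsMonicOrthogonal L n Q) :
    IsMonicOrthogonal L n ((-1) ^ n * Q.comp (-X)) := by
  have hmonic := hQ.monic.neg_one_pow_natDegree_mul_comp_neg_X
  rw [hQ.natDegree_eq] at hmonic
  refine ⟨hmonic, ?_, fun g hg => ?_⟩
  · rcases neg_one_pow_eq_or ℝ[X] n with h | h <;> simp [h, natDegree_comp, hQ.natDegree_eq]
  · rw [← hL, mul_assoc, mul_comp, mul_comp, comp_neg_X_comp_neg_X, pow_comp, neg_comp, one_comp,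
      mul_left_comm]
    refine hQ.map_mul_eq_zero _ ?_
    rcases neg_one_pow_eq_or ℝ[X] n with h | h <;> simpa [h] using hg

lemma isRoot_neg (hL : IsPositiveFunctional L) (hLsymm : IsSymmetricFunctional L)
    (hQ : IsMonicOrthogonal L n Q) {s : ℝ} (hs : Q.IsRoot s) : Q.IsRoot (-s) := by
  rw [hQ.unique hL (hQ.neg_one_pow_mul_comp_neg_X hLsymm), IsRoot.def, eval_mul, eval_comp,
    eval_neg, eval_X, neg_neg, hs.eq_zero, mul_zero]

lemma neg_mem_roots_toFinset (hL : IsPositiveFunctional L) (hLsymm : IsSymmetricFunctional L)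
    (hQ : IsMonicOrthogonal L n Q) : ∀ s ∈ Q.roots.toFinset, -s ∈ Q.roots.toFinset := fun _ hs =>
  hQ.mem_roots_toFinset.2 (hQ.isRoot_neg hL hLsymm (hQ.mem_roots_toFinset.1 hs))

lemma isRoot_zero_iff_odd (hL : IsPositiveFunctional L) (hLsymm : IsSymmetricFunctional L)
    (hQ : IsMonicOrthogonal L n Q) : Q.IsRoot 0 ↔ Odd n := by
  rw [← hQ.mem_roots_toFinset, zero_mem_iff_odd_card (hQ.neg_mem_roots_toFinset hL hLsymm),
    hQ.card_roots hL]

lemma exists_eq_X_mul (hL : IsPositiveFunctional L) (hLsymm : IsSymmetricFunctional L)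
    (hLX : ∀ f, L' f = L (X ^ 2 * f)) (hn : Even n) (hQ : IsMonicOrthogonal L (n + 1) Q) :
    ∃ R, IsMonicOrthogonal L' n R ∧ Q = X * R := by
  have h0 : Q.IsRoot 0 := (hQ.isRoot_zero_iff_odd hL hLsymm).2 hn.add_one
  obtain ⟨R, rfl⟩ : X ∣ Q := by simpa using dvd_iff_isRoot.2 h0
  exact ⟨R, of_mul_of_sq_mul hLX monic_X (by rwa [natDegree_X, add_comm]), rfl⟩

end IsMonicOrthogonal

namespace IsNthLargestPosZero

variable {ℓ : ℕ} {x y : ℝ}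

lemma card_roots_lt (hL : IsPositiveFunctional L) (hQ : IsMonicOrthogonal L n Q)
    (hx : IsNthLargestPosZero Q ℓ x) : #{s ∈ Q.roots.toFinset | s < x} + 1 + (ℓ - 1) = n := by
  rw [← hQ.card_roots hL, ← hx.2.2]
  exact card_filter_lt_add_one_add_card_filter_gt (hQ.mem_roots_toFinset.2 hx.2.1)

lemma lt_of_le_card_roots_gt (hℓ : 1 ≤ ℓ) (hy : IsNthLargestPosZero R ℓ y)
    (h : ℓ ≤ #{s ∈ R.roots.toFinset | x < s}) : x < y :=
  lt_of_card_filter_gt_lt (S := R.roots.toFinset) (by rw [hy.2.2]; lia)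

lemma of_X_mul (hQ : Q ≠ 0) (hx : IsNthLargestPosZero (X * Q) ℓ x) :
    IsNthLargestPosZero Q ℓ x := by
  obtain ⟨hpos, hroot, hcard⟩ := hx
  refine ⟨hpos, ?_, ?_⟩
  · simpa [hpos.ne'] using hroot
  · rw [← hcard, roots_mul (mul_ne_zero X_ne_zero hQ), roots_X]
    congr 1
    ext s
    simp only [Finset.mem_filter, Multiset.mem_toFinset, Multiset.mem_add, Multiset.mem_singleton]
    refine and_congr_left fun hs => (or_iff_right ?_).symm
    exact (hpos.trans hs).ne'

lemma unique (hQ : Q ≠ 0) (hx : IsNthLargestPosZero Q ℓ x) (hy : IsNthLargestPosZero Q ℓ y) :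
    x = y := by
  by_contra hne
  wlog hyx : y < x generalizing x y
  · exact this hy hx (Ne.symm hne) ((not_lt.1 hyx).lt_of_ne hne)
  have hlt : #{s ∈ Q.roots.toFinset | x < s} < #{s ∈ Q.roots.toFinset | y < s} :=
    Finset.card_lt_card <| Finset.ssubset_iff_of_subset
      (Finset.monotone_filter_right _ fun _ _ => hyx.trans) |>.2
      ⟨x, by simp [hQ, hyx, hx.2.1.eq_zero], by simp⟩
  rw [hx.2.2, hy.2.2] at hlt
  exact hlt.false

theorem lt_of_succ (hL : IsPositiveFunctional L) (hQ : IsMonicOrthogonal L (n + 1) Q)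
    (hR : IsMonicOrthogonal L n R) (hℓ : 1 ≤ ℓ) (hx : IsNthLargestPosZero Q (ℓ + 1) x)
    (hy : IsNthLargestPosZero R ℓ y) : x < y := by
  have hcount := hQ.le_card_roots_lt_add_card_roots_gt_of_succ hL hR x
  have hcard := hx.card_roots_lt hL hQ
  exact hy.lt_of_le_card_roots_gt hℓ (by lia)

theorem lt_of_sq_mul {u : ℝ[X]} (hL : IsPositiveFunctional L)
    (hLu : ∀ f, L' f = L (u ^ 2 * f)) (hu : u.natDegree ≠ 0) (hQ : IsMonicOrthogonal L' n Q)
    (hR : IsMonicOrthogonal L (n + u.natDegree) R) (huR : ∀ s, R.IsRoot s → u.eval s ≠ 0)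
    (hℓ : 1 ≤ ℓ) (hx : IsNthLargestPosZero Q ℓ x) (hy : IsNthLargestPosZero R ℓ y) : x < y := by
  have hcount := IsMonicOrthogonal.le_card_roots_lt_add_card_roots_gt_of_sq_mul hL hLu hu hQ hR
    huR x
  have hcard := hx.card_roots_lt (hL.of_sq_mul (ne_zero_of_natDegree_gt hu.bot_lt) hLu) hQ
  exact hy.lt_of_le_card_roots_gt hℓ (by lia)

theorem lt_of_sq_X_mul (hL : IsPositiveFunctional L) (hLsymm : IsSymmetricFunctional L)
    (hLX : ∀ f, L' f = L (X ^ 2 * f)) (hn : Odd n)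
    (hQ : IsMonicOrthogonal L' n Q) (hR : IsMonicOrthogonal L (n + 1) R)
    (hℓ : 1 ≤ ℓ) (hx : IsNthLargestPosZero Q ℓ x) (hy : IsNthLargestPosZero R ℓ y) : x < y := by
  refine hx.lt_of_sq_mul hL hLX (by simp) hQ (by rwa [natDegree_X]) (fun s hs hXs => ?_) hℓ hy
  rw [eval_X] at hXs
  exact Nat.not_odd_iff_even.2 hn.add_one ((hR.isRoot_zero_iff_odd hL hLsymm).1 (hXs ▸ hs))

theorem lt_of_markov (hL : IsPositiveFunctional L) (hL' : IsPositiveFunctional L')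
    (hLsymm : IsSymmetricFunctional L) (hLsymm' : IsSymmetricFunctional L')
    (hLL' : ∀ c > 0, ∃ K ≥ 0, ∀ r : ℝ[X], r ≠ 0 →
      K * L ((X ^ 2 - C c) * r ^ 2) < L' ((X ^ 2 - C c) * r ^ 2))
    (hQ : IsMonicOrthogonal L n Q) (hR : IsMonicOrthogonal L' n R)
    (hℓ : 1 ≤ ℓ) (hx : IsNthLargestPosZero Q ℓ x) (hy : IsNthLargestPosZero R ℓ y) : x < y := by
  obtain ⟨K, hK, hLK⟩ := hLL' (x ^ 2) (pow_pos hx.1 2)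
  have hcount := IsMonicOrthogonal.le_card_roots_lt_add_card_roots_gt_of_markov hL hL' hQ hR hK hLK
  have hcard := card_filter_sq_lt_sq_add (hQ.neg_mem_roots_toFinset hL hLsymm) hx.1
    (hQ.mem_roots_toFinset.2 hx.2.1)
  simp only [eval_pow, eval_X, natDegree_X_pow,
    card_filter_sq_lt_sq (hR.neg_mem_roots_toFinset hL' hLsymm') hx.1.le] at hcount
  rw [hx.2.2, hQ.card_roots hL] at hcard
  exact hy.lt_of_le_card_roots_gt hℓ (by lia)

theorem eq_of_sq_X_mul (hL : IsPositiveFunctional L) (hLsymm : IsSymmetricFunctional L)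
    (hLX : ∀ f, L' f = L (X ^ 2 * f)) (hn : Even n)
    (hQ : IsMonicOrthogonal L' n Q) (hR : IsMonicOrthogonal L (n + 1) R)
    (hx : IsNthLargestPosZero Q ℓ x) (hy : IsNthLargestPosZero R ℓ y) : x = y := by
  obtain ⟨R, hR', rfl⟩ := hR.exists_eq_X_mul hL hLsymm hLX hn
  obtain rfl := hQ.unique (hL.of_sq_mul X_ne_zero hLX) hR'
  exact hx.unique hQ.monic.ne_zero (hy.of_X_mul hQ.monic.ne_zero)

end IsNthLargestPosZero

end OrthogonalPolynomials

section Moments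

/-- The weight `v` has finite moments of all orders. -/
def HasFiniteMoments (v : ℝ → ℝ) : Prop :=
  ∀ n : ℕ, Integrable fun x => x ^ n * v x

/-- The moment functional `f ↦ ∫ f(x) v(x) dx` of a weight `v`. It is defined through the moments
of `v`, hence is total; it is the integral only when `v` has finite moments, see
`momentFunctional_apply`. -/
noncomputable def momentFunctional (v : ℝ → ℝ) : ℝ[X] →ₗ[ℝ] ℝ :=
  lsum fun n => (∫ x, x ^ n * v x) • LinearMap.id

variable {v v' : ℝ → ℝ} {f : ℝ[X]}

lemma HasFiniteMoments.integrable_eval_mul (hv : HasFiniteMoments v) (f : ℝ[X]) :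
    Integrable fun x => f.eval x * v x := by
  simp only [eval_eq_sum_range, Finset.sum_mul, mul_assoc]
  exact integrable_finsetSum _ fun n _ => (hv n).const_mul _

lemma momentFunctional_apply (hv : HasFiniteMoments v) (f : ℝ[X]) :
    momentFunctional v f = ∫ x, f.eval x * v x := by
  simp only [eval_eq_sum_range, Finset.sum_mul, mul_assoc]
  rw [integral_finsetSum _ fun n _ => (hv n).const_mul _]
  simp only [integral_const_mul]
  exact (sum_over_range _ fun n => by simp).trans <|
    Finset.sum_congr rfl fun n _ => mul_comm _ _

lemma ae_eval_ne_zero (hf : f ≠ 0) : ∀ᵐ x : ℝ, f.eval x ≠ 0 := by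
  rw [ae_iff]
  simpa only [not_not, IsRoot.def] using (finite_setOfPred_isRoot hf).measure_zero volume

lemma integral_pos_of_ae_pos {g : ℝ → ℝ} (hg : Integrable g) (hpos : ∀ᵐ x, 0 < g x) :
    0 < ∫ x, g x := by
  have hnonneg : 0 ≤ᵐ[volume] g := hpos.mono fun _ => le_of_lt
  refine (integral_nonneg_of_ae hnonneg).lt_of_ne' fun h => ?_
  obtain ⟨x, hx, hx'⟩ := (((integral_eq_zero_iff_of_nonneg_ae hnonneg hg).1 h).and hpos).exists
  exact hx'.ne' hx

lemma isPositiveFunctional_momentFunctional (hv : HasFiniteMoments v) (hpos : ∀ᵐ x, 0 < v x) :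
    IsPositiveFunctional (momentFunctional v) := fun f hf hnonneg => by
  rw [momentFunctional_apply hv]
  refine integral_pos_of_ae_pos (hv.integrable_eval_mul f) ?_
  filter_upwards [hpos, ae_eval_ne_zero hf] with x hvx hfx
  exact mul_pos ((hnonneg x).lt_of_ne' hfx) hvx

lemma isSymmetricFunctional_momentFunctional (hv : HasFiniteMoments v) (heven : v.Even) :
    IsSymmetricFunctional (momentFunctional v) := fun f => by
  rw [momentFunctional_apply hv, momentFunctional_apply hv, ← integral_neg_eq_self]
  simp only [eval_comp, eval_neg, eval_X, neg_neg, heven _]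

lemma momentFunctional_eq_map_mul (hv : HasFiniteMoments v) (hv' : HasFiniteMoments v')
    {u : ℝ[X]} (huv : ∀ᵐ x, v' x = u.eval x * v x) (f : ℝ[X]) :
    momentFunctional v' f = momentFunctional v (u * f) := by
  rw [momentFunctional_apply hv, momentFunctional_apply hv']
  refine integral_congr_ae (huv.mono fun x hx => ?_)
  simp only [hx, eval_mul]
  ring

lemma mul_sub_pos_of_strictMonoOn {g : ℝ → ℝ} {D : Set ℝ} (hg : StrictMonoOn g D) {a b : ℝ}
    (ha : a ∈ D) (hb : b ∈ D) (hab : a ≠ b) : 0 < (a - b) * (g a - g b) := by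
  rcases hab.lt_or_gt with h | h
  · exact mul_pos_of_neg_of_neg (sub_neg.2 h) (sub_neg.2 (hg ha hb h))
  · exact mul_pos (sub_pos.2 h) (sub_pos.2 (hg hb ha h))

lemma mul_momentFunctional_lt_of_strictMonoOn (hv : HasFiniteMoments v) (hv' : HasFiniteMoments v')
    (hpos : ∀ᵐ x, 0 < v x) {g : ℝ → ℝ} {D : Set ℝ} (hg : StrictMonoOn g D) {q r : ℝ[X]}
    (hq : ∀ x, q.eval x ∈ D) (hvv' : ∀ᵐ x, v' x = g (q.eval x) * v x) {c : ℝ} (hc : c ∈ D)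
    (hqc : q - C c ≠ 0) (hr : r ≠ 0) :
    g c * momentFunctional v ((q - C c) * r ^ 2) < momentFunctional v' ((q - C c) * r ^ 2) := by
  set f := (q - C c) * r ^ 2 with hf
  have hint := (hv.integrable_eval_mul f).const_mul (g c)
  have hint' := hv'.integrable_eval_mul f
  rw [← sub_pos, momentFunctional_apply hv, momentFunctional_apply hv', ← integral_const_mul,
    ← integral_sub hint' hint]
  refine integral_pos_of_ae_pos (hint'.sub hint) ?_
  filter_upwards [hpos, hvv', ae_eval_ne_zero hqc, ae_eval_ne_zero hr] with x hvx hvx' hqx hrx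
  rw [eval_sub, eval_C, sub_ne_zero] at hqx
  calc 0 < (q.eval x - c) * (g (q.eval x) - g c) * (r.eval x ^ 2 * v x) :=
        mul_pos (mul_sub_pos_of_strictMonoOn hg (hq x) hc hqx) (mul_pos (sq_pos_of_ne_zero hrx) hvx)
    _ = f.eval x * v' x - g c * (f.eval x * v x) := by
        rw [hvx', hf, eval_mul, eval_pow, eval_sub, eval_C]
        ring

lemma isMonicOrthogonal_momentFunctional (hv : HasFiniteMoments v) {p : ℕ → ℝ[X]}
    (hmonic : ∀ n, (p n).Monic) (hdeg : ∀ n, (p n).natDegree = n)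
    (horth : ∀ j k, j ≠ k → ∫ x, (p j).eval x * (p k).eval x * v x = 0) (n : ℕ) :
    IsMonicOrthogonal (momentFunctional v) n (p n) :=
  isMonicOrthogonal_of_pairwise hmonic hdeg
    (fun j k hjk => by
      rw [momentFunctional_apply hv]
      simpa only [eval_mul] using horth j k hjk) n

end Moments

section AbsPowWeight

/-- The weight `|x|^{2λ+1} w(x)` obtained from `w` by a generalised Gegenbauer-type factor; the
generalised Freud weight is the case `w(x) = exp(t x² − x^{2m})`. -/
noncomputable def absPowWeight (w : ℝ → ℝ) (lam x : ℝ) : ℝ :=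
  |x| ^ (2 * lam + 1) * w x

variable {w : ℝ → ℝ} {lam : ℝ}

lemma absPowWeight_even (hw : w.Even) : (absPowWeight w lam).Even := fun x => by
  rw [absPowWeight, absPowWeight, abs_neg, hw]

lemma ae_absPowWeight_pos (hw : ∀ᵐ x, 0 < w x) : ∀ᵐ x, 0 < absPowWeight w lam x := by
  filter_upwards [hw, volume.ae_ne 0] with x hwx hx
  exact mul_pos (rpow_pos_of_pos (abs_pos.2 hx) _) hwx

lemma absPowWeight_add {x : ℝ} (hx : x ≠ 0) (k : ℝ) :
    absPowWeight w (lam + k) x = (x ^ 2) ^ k * absPowWeight w lam x := by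
  have hpos := abs_pos.2 hx
  rw [absPowWeight, absPowWeight, show 2 * (lam + k) + 1 = 2 * k + (2 * lam + 1) by ring,
    rpow_add hpos, rpow_mul hpos.le, rpow_two, sq_abs, mul_assoc]

lemma ae_absPowWeight_add (k : ℝ) :
    ∀ᵐ x, absPowWeight w (lam + k) x = (x ^ 2) ^ k * absPowWeight w lam x := by
  filter_upwards [volume.ae_ne 0] with x hx using absPowWeight_add hx k

lemma momentFunctional_absPowWeight_add_one (h : HasFiniteMoments (absPowWeight w lam))
    (h' : HasFiniteMoments (absPowWeight w (lam + 1))) (f : ℝ[X]) :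
    momentFunctional (absPowWeight w (lam + 1)) f =
      momentFunctional (absPowWeight w lam) (X ^ 2 * f) := by
  refine momentFunctional_eq_map_mul h h' ?_ f
  filter_upwards [ae_absPowWeight_add 1] with x hx
  rw [hx, rpow_one, eval_pow, eval_X]

lemma mul_momentFunctional_absPowWeight_lt (hw : ∀ᵐ x, 0 < w x) {k : ℝ} (hk : 0 < k)
    (h : HasFiniteMoments (absPowWeight w lam)) (h' : HasFiniteMoments (absPowWeight w (lam + k)))
    {c : ℝ} (hc : 0 ≤ c) {r : ℝ[X]} (hr : r ≠ 0) :
    c ^ k * momentFunctional (absPowWeight w lam) ((X ^ 2 - C c) * r ^ 2) <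
      momentFunctional (absPowWeight w (lam + k)) ((X ^ 2 - C c) * r ^ 2) := by
  refine mul_momentFunctional_lt_of_strictMonoOn h h' (ae_absPowWeight_pos hw) (D := Set.Ici 0)
    (strictMonoOn_rpow_Ici_of_exponent_pos hk) (fun x => ?_) ?_ hc
    (X_pow_sub_C_ne_zero two_pos c) hr
  · rw [eval_pow, eval_X]; exact sq_nonneg x
  · simpa only [eval_pow, eval_X] using ae_absPowWeight_add k

theorem IsNthLargestPosZero.lt_of_absPowWeight_lt (heven : w.Even) (hw : ∀ᵐ x, 0 < w x) {μ : ℝ}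
    (hμ : lam < μ) (h : HasFiniteMoments (absPowWeight w lam))
    (h' : HasFiniteMoments (absPowWeight w μ)) {n : ℕ} {Q R : ℝ[X]}
    (hQ : IsMonicOrthogonal (momentFunctional (absPowWeight w lam)) n Q)
    (hR : IsMonicOrthogonal (momentFunctional (absPowWeight w μ)) n R) {ℓ : ℕ} (hℓ : 1 ≤ ℓ)
    {x y : ℝ} (hx : IsNthLargestPosZero Q ℓ x) (hy : IsNthLargestPosZero R ℓ y) : x < y := by
  obtain ⟨k, hk, rfl⟩ : ∃ k > 0, μ = lam + k := ⟨μ - lam, sub_pos.2 hμ, by ring⟩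
  exact hx.lt_of_markov (isPositiveFunctional_momentFunctional h (ae_absPowWeight_pos hw))
    (isPositiveFunctional_momentFunctional h' (ae_absPowWeight_pos hw))
    (isSymmetricFunctional_momentFunctional h (absPowWeight_even heven))
    (isSymmetricFunctional_momentFunctional h' (absPowWeight_even heven))
    (fun c hc => ⟨c ^ k, rpow_nonneg hc.le k, fun r hr =>
      mul_momentFunctional_absPowWeight_lt hw hk h h' hc.le hr⟩) hQ hR hℓ hy

end AbsPowWeight

section FiniteMoments

lemma integrable_of_even {f : ℝ → ℝ} (hf : f.Even) (hint : IntegrableOn f (Set.Ioi 0)) :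
    Integrable f := by
  have hneg : IntegrableOn f (Set.Iio 0) :=
    (funext hf : (fun x => f (-x)) = f) ▸ (neg_zero (G := ℝ) ▸ hint).comp_neg_Iio
  rw [← integrableOn_univ, ← Set.Iic_union_Ioi (a := (0 : ℝ)), integrableOn_union]
  exact ⟨(integrableOn_Iic_iff_integrableOn_Iio).2 hneg, hint⟩

lemma integrable_abs_rpow_mul_exp_neg_sq {a : ℝ} (ha : -1 < a) :
    Integrable fun x : ℝ => |x| ^ a * exp (-x ^ 2) := by
  refine integrable_of_even (fun x => by rw [abs_neg, neg_sq]) ?_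
  refine (integrableOn_rpow_mul_exp_neg_mul_sq one_pos ha).congr_fun (fun x hx => ?_)
    measurableSet_Ioi
  simp only [abs_of_pos (Set.mem_Ioi.1 hx), neg_mul, one_mul]

lemma hasFiniteMoments_absPowWeight {w : ℝ → ℝ} (hw : Measurable w) {A : ℝ}
    (hA : ∀ x, |w x| ≤ A * exp (-x ^ 2)) {lam : ℝ} (hlam : -1 < lam) :
    HasFiniteMoments (absPowWeight w lam) := fun n => by
  have hexp : -1 < 2 * lam + 1 + n := by linarith [n.cast_nonneg (α := ℝ)]
  have hdom := (integrable_abs_rpow_mul_exp_neg_sq hexp).const_mul A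
  refine hdom.mono' (by unfold absPowWeight; fun_prop) ?_
  filter_upwards [volume.ae_ne 0] with x hx
  calc ‖x ^ n * absPowWeight w lam x‖ = |x| ^ (2 * lam + 1 + n) * |w x| := by
        rw [absPowWeight, norm_eq_abs, abs_mul, abs_mul, abs_pow, rpow_add (abs_pos.2 hx) _ n,
          rpow_natCast, abs_of_nonneg (rpow_nonneg (abs_nonneg x) _)]
        ring
    _ ≤ |x| ^ (2 * lam + 1 + n) * (A * exp (-x ^ 2)) := by gcongr; exact hA x
    _ = A * (|x| ^ (2 * lam + 1 + n) * exp (-x ^ 2)) := mul_left_comm _ _ _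

lemma mul_sq_sub_pow_le {m : ℕ} (hm : 2 ≤ m) (t x : ℝ) :
    t * x ^ 2 - x ^ (2 * m) ≤ (t + 1) ^ 2 + 1 - x ^ 2 := by
  have hpow : (x ^ 2) ^ 2 - 1 ≤ (x ^ 2) ^ m := by
    rcases le_total 1 (x ^ 2) with h | h
    · linarith [pow_le_pow_right₀ h hm]
    · linarith [pow_le_one₀ (n := 2) (sq_nonneg x) h, pow_nonneg (sq_nonneg x) m]
  rw [pow_mul]
  linarith [sq_nonneg (2 * x ^ 2 - (t + 1)), sq_nonneg (t + 1)]

lemma hasFiniteMoments_freud {m : ℕ} (hm : 2 ≤ m) (t : ℝ) {lam : ℝ} (hlam : -1 < lam) :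
    HasFiniteMoments (absPowWeight (fun x => exp (t * x ^ 2 - x ^ (2 * m))) lam) := by
  refine hasFiniteMoments_absPowWeight (A := exp ((t + 1) ^ 2 + 1)) (by fun_prop) (fun x => ?_) hlam
  rw [abs_exp, ← exp_add, exp_le_exp]
  exact mul_sq_sub_pow_le hm t x

end FiniteMoments

theorem zeros_interlacing_general (w : ℝ → ℝ) (heven : w.Even) (hpos : ∀ᵐ x, 0 < w x)
    (hmoments : ∀ lam, -1 < lam → HasFiniteMoments (absPowWeight w lam))
    (P : ℝ → ℕ → Polynomial ℝ)
    (hmonic : ∀ lam, -1 < lam → ∀ n, (P lam n).Monic)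
    (hdeg : ∀ lam, -1 < lam → ∀ n, (P lam n).natDegree = n)
    (horth : ∀ lam, -1 < lam → ∀ j k, j ≠ k →
      ∫ x : ℝ, (P lam j).eval x * (P lam k).eval x * absPowWeight w lam x = 0) :
    ∀ lam, -1 < lam → ∀ n : ℕ, 1 ≤ n → ∀ ℓ : ℕ, 1 ≤ ℓ → ∀ k : ℝ, 0 < k → k < 1 →
      (∀ za zb zc zd ze : ℝ,
        IsNthLargestPosZero (P lam (2 * n)) (ℓ + 1) za →
        IsNthLargestPosZero (P lam (2 * n - 1)) ℓ zb →
        IsNthLargestPosZero (P (lam + k) (2 * n - 1)) ℓ zc →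
        IsNthLargestPosZero (P (lam + 1) (2 * n - 1)) ℓ zd →
        IsNthLargestPosZero (P lam (2 * n)) ℓ ze →
        za < zb ∧ zb < zc ∧ zc < zd ∧ zd < ze) ∧
      (∀ z₁ z₂ z₃ z₄ z₅ : ℝ,
        IsNthLargestPosZero (P lam (2 * n + 1)) (ℓ + 1) z₁ →
        IsNthLargestPosZero (P lam (2 * n)) ℓ z₂ →
        IsNthLargestPosZero (P (lam + k) (2 * n)) ℓ z₃ →
        IsNthLargestPosZero (P (lam + 1) (2 * n)) ℓ z₄ →
        IsNthLargestPosZero (P lam (2 * n + 1)) ℓ z₅ →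
        z₁ < z₂ ∧ z₂ < z₃ ∧ z₃ < z₄ ∧ z₄ = z₅) := by
  intro lam hlam n hn ℓ hℓ k hk hk1
  have hlamk : -1 < lam + k := by linarith
  have hlam1 : -1 < lam + 1 := by linarith
  have hP : ∀ μ, -1 < μ → ∀ n, IsMonicOrthogonal (momentFunctional (absPowWeight w μ)) n (P μ n) :=
    fun μ hμ => isMonicOrthogonal_momentFunctional (hmoments μ hμ) (hmonic μ hμ) (hdeg μ hμ)
      (horth μ hμ)
  have hL := isPositiveFunctional_momentFunctional (hmoments lam hlam) (ae_absPowWeight_pos hpos)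
  have hLsymm :=
    isSymmetricFunctional_momentFunctional (hmoments lam hlam) (absPowWeight_even heven)
  have hLX := momentFunctional_absPowWeight_add_one (hmoments lam hlam) (hmoments _ hlam1)
  have hmarkov : ∀ {μ ν : ℝ}, -1 < μ → μ < ν → ∀ {N : ℕ} {x y : ℝ},
      IsNthLargestPosZero (P μ N) ℓ x → IsNthLargestPosZero (P ν N) ℓ y → x < y :=
    fun {μ ν} hμ hμν {N _ _} hx hy =>
      have hν := hμ.trans hμν
      hx.lt_of_absPowWeight_lt heven hpos hμν (hmoments μ hμ) (hmoments ν hν) (hP μ hμ N)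
        (hP ν hν N) hℓ hy
  refine ⟨fun za zb zc zd ze ha hb hc hd he => ?_, fun z₁ z₂ z₃ z₄ z₅ h₁ h₂ h₃ h₄ h₅ => ?_⟩
  · obtain ⟨N, rfl⟩ : ∃ N, n = N + 1 := ⟨n - 1, by lia⟩
    have hodd : Odd (2 * (N + 1) - 1) := ⟨N, by lia⟩
    exact ⟨ha.lt_of_succ hL (hP lam hlam _) (hP lam hlam _) hℓ hb,
      hmarkov hlam (by linarith) hb hc, hmarkov hlamk (by linarith) hc hd,
      hd.lt_of_sq_X_mul hL hLsymm hLX hodd (hP _ hlam1 _) (hP lam hlam _) hℓ he⟩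
  · exact ⟨h₁.lt_of_succ hL (hP lam hlam _) (hP lam hlam _) hℓ h₂,
      hmarkov hlam (by linarith) h₂ h₃, hmarkov hlamk (by linarith) h₃ h₄,
      h₄.eq_of_sq_X_mul hL hLsymm hLX (even_two_mul n) (hP _ hlam1 _) (hP lam hlam _) h₅⟩

/-- Interlacing of the zeros of generalised higher order Freud polynomials:
writing `x_{ℓ,n}^{λ}` for the `ℓ`-th largest positive zero of `P_n(x;λ)`, for every `n ≥ 2`,
`ℓ ∈ {1,…,n−1}` and `k ∈ (0,1)`,
(i) `x_{ℓ+1,2n}^{λ} < x_{ℓ,2n−1}^{λ} < x_{ℓ,2n−1}^{λ+k} < x_{ℓ,2n−1}^{λ+1} < x_{ℓ,2n}^{λ}`, and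
(ii) `x_{ℓ+1,2n+1}^{λ} < x_{ℓ,2n}^{λ} < x_{ℓ,2n}^{λ+k} < x_{ℓ,2n}^{λ+1} = x_{ℓ,2n+1}^{λ}`. -/
theorem zeros_interlacing (m : ℕ) (hm : 2 ≤ m) (t : ℝ)
    (P : ℝ → ℕ → Polynomial ℝ)
    (hmonic : ∀ lam, -1 < lam → ∀ n, (P lam n).Monic)
    (hdeg : ∀ lam, -1 < lam → ∀ n, (P lam n).natDegree = n)
    (horth : ∀ lam, -1 < lam → ∀ j k, j ≠ k →
      ∫ x : ℝ, (P lam j).eval x * (P lam k).eval x * freudWeight m lam t x = 0) :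
    ∀ lam, -1 < lam → ∀ n : ℕ, 2 ≤ n → ∀ ℓ : ℕ, 1 ≤ ℓ → ℓ ≤ n - 1 →
      ∀ k : ℝ, 0 < k → k < 1 →
      (∀ za zb zc zd ze : ℝ,
        IsNthLargestPosZero (P lam (2 * n)) (ℓ + 1) za →
        IsNthLargestPosZero (P lam (2 * n - 1)) ℓ zb →
        IsNthLargestPosZero (P (lam + k) (2 * n - 1)) ℓ zc →
        IsNthLargestPosZero (P (lam + 1) (2 * n - 1)) ℓ zd →
        IsNthLargestPosZero (P lam (2 * n)) ℓ ze →
        za < zb ∧ zb < zc ∧ zc < zd ∧ zd < ze) ∧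
      (∀ z₁ z₂ z₃ z₄ z₅ : ℝ,
        IsNthLargestPosZero (P lam (2 * n + 1)) (ℓ + 1) z₁ →
        IsNthLargestPosZero (P lam (2 * n)) ℓ z₂ →
        IsNthLargestPosZero (P (lam + k) (2 * n)) ℓ z₃ →
        IsNthLargestPosZero (P (lam + 1) (2 * n)) ℓ z₄ →
        IsNthLargestPosZero (P lam (2 * n + 1)) ℓ z₅ →
        z₁ < z₂ ∧ z₂ < z₃ ∧ z₃ < z₄ ∧ z₄ = z₅) := by
  intro lam hlam n hn ℓ hℓ _
  exact zeros_interlacing_general (fun x => exp (t * x ^ 2 - x ^ (2 * m)))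
    (fun x => by simp only [neg_sq, (even_two_mul m).neg_pow]) (.of_forall fun _ => exp_pos _)
    (fun _ => hasFiniteMoments_freud hm t) P hmonic hdeg horth lam hlam n (by lia) ℓ hℓ
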